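/- Let F_x denote the distribution function of T₂ = n⁻¹ Σᵢ log Yᵢ - log(n⁻¹ Σᵢ Yᵢ) where Y₁,...,Yₙ are iid Gamma(x, 1), n ≥ 2. Then for every t₂ in the support (which is a subset of (-∞, 0)) and every u₂ ∈ (0,1), the equation F_x(t₂) = u₂ has a solution in x ∈ (0,∞), and this solution is unique; i.e., x ↦ F_x(t₂) is strictly decreasing with limits 1 as x → 0⁺ and 0 as x → ∞. -/

import Mathlib

open MeasureTheory Set Filter

/-- The distribution function `F_x(t)` of
`T₂ = n⁻¹ Σᵢ log Yᵢ - log(n⁻¹ Σᵢ Yᵢ)` when `Y₁,…,Yₙ` are iid `Gamma(x,1)`. -/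
noncomputable def gammaLogRatioCDF (n : ℕ) (x t : ℝ) : ℝ :=
  ((Measure.pi fun _ : Fin n => ProbabilityTheory.gammaMeasure x 1)
    {y : Fin n → ℝ |
      (∑ i, Real.log (y i)) / n - Real.log ((∑ i, y i) / n) ≤ t}).toReal


namespace GammaIM
open ProbabilityTheory
open scoped ENNReal

/-- The open positive orthant. -/
def orth (n : ℕ) : Set (Fin n → ℝ) := {y | ∀ i, 0 < y i}

/-- The statistic. -/
noncomputable def T (n : ℕ) (y : Fin n → ℝ) : ℝ :=
  (∑ i, Real.log (y i)) / n - Real.log ((∑ i, y i) / n)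

lemma measurable_T (n : ℕ) : Measurable (T n) := by
  unfold T
  fun_prop

lemma isOpen_orth (n : ℕ) : IsOpen (orth n) := by
  have : orth n = ⋂ i, {y | 0 < y i} := by ext; simp [orth]
  rw [this]
  exact isOpen_iInter_of_finite fun i => isOpen_lt continuous_const (continuous_apply i)

lemma measurableSet_orth (n : ℕ) : MeasurableSet (orth n) := (isOpen_orth n).measurableSet

lemma integrable_gammaPDFReal {x : ℝ} (hx : 0 < x) : Integrable (gammaPDFReal x 1) := by
  refine ⟨(measurable_gammaPDFReal x 1).aestronglyMeasurable, ?_⟩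
  rw [hasFiniteIntegral_iff_ofReal (ae_of_all _ fun y => gammaPDFReal_nonneg hx one_pos y)]
  have := lintegral_gammaPDF_eq_one hx one_pos
  unfold gammaPDF at this
  rw [this]
  exact ENNReal.one_lt_top

lemma measurable_gammaPDF (x : ℝ) : Measurable (gammaPDF x 1) :=
  (measurable_gammaPDFReal x 1).ennreal_ofReal

lemma pi_gamma (n : ℕ) {x : ℝ} (hx : 0 < x) :
    (Measure.pi fun _ : Fin n => gammaMeasure x 1) =
      (volume : Measure (Fin n → ℝ)).withDensity (fun y => ∏ i, gammaPDF x 1 (y i)) := by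
  have := isProbabilityMeasure_gammaMeasure hx one_pos
  refine Measure.pi_eq (μ := fun _ : Fin n => gammaMeasure x 1) fun s hs => ?_
  rw [withDensity_apply _ (MeasurableSet.univ_pi hs), ← lintegral_indicator (MeasurableSet.univ_pi hs)]
  have h0 : ∀ i y, 0 ≤ (s i).indicator (gammaPDFReal x 1) y := fun i y =>
    Set.indicator_nonneg (fun y _ => gammaPDFReal_nonneg hx one_pos y) y
  have hI : ∀ i, Integrable ((s i).indicator (gammaPDFReal x 1)) := fun i =>
    (integrable_gammaPDFReal hx).indicator (hs i)
  have h1 : ∀ y : Fin n → ℝ, (univ.pi s).indicator (fun y => ∏ i, gammaPDF x 1 (y i)) y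
      = ENNReal.ofReal (∏ i, (s i).indicator (gammaPDFReal x 1) (y i)) := by
    intro y
    rw [ENNReal.ofReal_prod_of_nonneg (fun i _ => h0 i _)]
    by_cases hy : y ∈ univ.pi s
    · rw [Set.indicator_of_mem hy]
      refine Finset.prod_congr rfl fun i _ => ?_
      rw [Set.indicator_of_mem (hy i (mem_univ i))]
      rfl
    · rw [Set.indicator_of_notMem hy]
      simp only [Set.mem_pi, not_forall, mem_univ] at hy
      obtain ⟨i, _, hi⟩ := hy
      symm
      apply Finset.prod_eq_zero (Finset.mem_univ i)
      rw [Set.indicator_of_notMem hi, ENNReal.ofReal_zero]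
  simp_rw [h1]
  have hint : Integrable (fun y : Fin n → ℝ => ∏ i, (s i).indicator (gammaPDFReal x 1) (y i)) :=
    Integrable.fintype_prod_dep hI
  rw [← ofReal_integral_eq_lintegral_ofReal hint
    (ae_of_all _ fun y => Finset.prod_nonneg fun i _ => h0 i _),
    integral_fintype_prod_volume_eq_prod (fun i => (s i).indicator (gammaPDFReal x 1)),
    ENNReal.ofReal_prod_of_nonneg (fun i _ => integral_nonneg (h0 i))]
  refine Finset.prod_congr rfl fun i _ => ?_
  rw [ofReal_integral_eq_lintegral_ofReal (hI i) (ae_of_all _ (h0 i)), gammaMeasure,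
    withDensity_apply _ (hs i), ← lintegral_indicator (hs i)]
  refine lintegral_congr fun y => ?_
  by_cases hy : y ∈ s i <;> simp [hy, gammaPDF]

/-- radial factor -/
noncomputable def phi (n : ℕ) (x s : ℝ) : ℝ := Real.exp (n * (x - 1) * Real.log s - s)

/-- normalising constant -/
noncomputable def k1 (n : ℕ) (x : ℝ) : ℝ :=
  (Real.Gamma x ^ n)⁻¹ * Real.exp (-(n * (x - 1) * Real.log n))

lemma prod_pdf (n : ℕ) (hn : 0 < n) {x : ℝ} (hx : 0 < x) {y : Fin n → ℝ} (hy : y ∈ orth n) :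
    ∏ i, gammaPDF x 1 (y i) = ENNReal.ofReal (k1 n x) *
      (ENNReal.ofReal (Real.exp (n * (x - 1) * T n y)) * ENNReal.ofReal (phi n x (∑ i, y i))) := by
  have hk : 0 ≤ k1 n x := by
    unfold k1
    have := Real.Gamma_pos_of_pos hx
    positivity
  have hn' : (0 : ℝ) < n := by exact_mod_cast hn
  have : Nonempty (Fin n) := ⟨⟨0, hn⟩⟩
  have hS : 0 < ∑ i, y i := Finset.sum_pos (fun i _ => hy i) Finset.univ_nonempty
  rw [← ENNReal.ofReal_mul (by positivity), ← ENNReal.ofReal_mul hk]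
  have h1 : ∀ i, gammaPDF x 1 (y i) = ENNReal.ofReal ((Real.Gamma x)⁻¹ *
      Real.exp ((x - 1) * Real.log (y i) - y i)) := by
    intro i
    rw [gammaPDF_of_nonneg (hy i).le]
    congr 1
    rw [Real.one_rpow, Real.rpow_def_of_pos (hy i), Real.exp_sub, one_mul, Real.exp_neg]
    ring_nf
  simp_rw [h1]
  rw [← ENNReal.ofReal_prod_of_nonneg]
  · congr 1
    rw [Finset.prod_mul_distrib, ← Real.exp_sum]
    simp only [Finset.prod_const, Finset.card_univ, Fintype.card_fin, k1, phi, T]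
    rw [mul_assoc, ← Real.exp_add, ← Real.exp_add, inv_pow]
    congr 2
    rw [Finset.sum_sub_distrib, ← Finset.mul_sum, Real.log_div hS.ne' hn'.ne']
    field_simp
    ring
  · intro i _
    have := Real.Gamma_pos_of_pos hx
    positivity

lemma ae_ne_zero (n : ℕ) : ∀ᵐ y : Fin n → ℝ, ∀ i, y i ≠ 0 := by
  rw [ae_all_iff]
  intro i
  have := (Measure.quasiMeasurePreserving_eval (μ := fun _ : Fin n => (volume : Measure ℝ)) i).ae
    (p := fun z => z ≠ 0) (by simp [ae_iff])
  exact this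

lemma lintegral_gamma (n : ℕ) (hn : 0 < n) {x : ℝ} (hx : 0 < x) {h : (Fin n → ℝ) → ℝ≥0∞}
    (hh : Measurable h) :
    ∫⁻ y, h y ∂(Measure.pi fun _ : Fin n => gammaMeasure x 1) =
      ENNReal.ofReal (k1 n x) * ∫⁻ y in orth n,
        h y * ENNReal.ofReal (Real.exp (n * (x - 1) * T n y)) *
          ENNReal.ofReal (phi n x (∑ i, y i)) := by
  have hm : Measurable (fun y : Fin n → ℝ => ∏ i, gammaPDF x 1 (y i)) :=
    Finset.measurable_prod _ fun i _ => (measurable_gammaPDF x).comp (measurable_pi_apply i)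
  have hT := measurable_T n
  rw [pi_gamma n hx, lintegral_withDensity_eq_lintegral_mul _ hm hh,
    ← lintegral_const_mul]
  · rw [← lintegral_indicator (measurableSet_orth n)]
    refine lintegral_congr_ae ?_
    filter_upwards [ae_ne_zero n] with y hy
    by_cases hyo : y ∈ orth n
    · rw [Set.indicator_of_mem hyo, Pi.mul_apply, prod_pdf n hn hx hyo]
      ring
    · rw [Set.indicator_of_notMem hyo, Pi.mul_apply]
      simp only [orth, Set.mem_ofPred_eq, not_forall, not_lt] at hyo
      obtain ⟨i, hi⟩ := hyo
      rw [Finset.prod_eq_zero (Finset.mem_univ i), zero_mul]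
      exact gammaPDF_of_neg (lt_of_le_of_ne hi (hy i))
  · unfold phi
    fun_prop


lemma lintegral_orth_scale (n : ℕ) (v : ℝ) {g : (Fin n → ℝ) → ℝ≥0∞} (hg : Measurable g) :
    ∫⁻ y in orth n, g y =
      ENNReal.ofReal (Real.exp (-(n * v))) * ∫⁻ y in orth n, g (Real.exp (-v) • y) := by
  have hc : Real.exp (-v) ≠ 0 := (Real.exp_pos _).ne'
  have h := Measure.map_addHaar_smul (volume : Measure (Fin n → ℝ)) hc
  have h2 : ∫⁻ y in orth n, g (Real.exp (-v) • y) =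
      ∫⁻ y, (orth n).indicator g y ∂(Measure.map (fun y : Fin n → ℝ => Real.exp (-v) • y) volume) := by
    rw [lintegral_map (hg.indicator (measurableSet_orth n)) (measurable_const_smul _),
      ← lintegral_indicator (measurableSet_orth n)]
    refine lintegral_congr fun y => ?_
    have : Real.exp (-v) • y ∈ orth n ↔ y ∈ orth n := by
      simp [orth, Real.exp_pos]
    by_cases hy : y ∈ orth n
    · rw [Set.indicator_of_mem hy, Set.indicator_of_mem (this.2 hy)]
    · rw [Set.indicator_of_notMem hy, Set.indicator_of_notMem (fun h => hy (this.1 h))]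
  rw [h2]
  erw [h]
  rw [lintegral_smul_measure, lintegral_indicator (measurableSet_orth n), smul_eq_mul, ← mul_assoc,
    ← ENNReal.ofReal_mul (Real.exp_pos _).le]
  have : Real.exp (-(n * v)) * |(Real.exp (-v) ^ Module.finrank ℝ (Fin n → ℝ))⁻¹| = 1 := by
    rw [Module.finrank_fin_fun, ← Real.exp_nat_mul, ← Real.exp_neg, Real.abs_exp, ← Real.exp_add]
    simp
  rw [this, ENNReal.ofReal_one, one_mul]

lemma radial (n : ℕ) (hn : 0 < n) {H : (Fin n → ℝ) → ℝ≥0∞} (hH : Measurable H)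
    (hinv : ∀ c : ℝ, 0 < c → ∀ y ∈ orth n, H (c • y) = H y)
    {φ ψ : ℝ → ℝ≥0∞} (hφ : Measurable φ) (hψ : Measurable ψ) :
    (∫⁻ y in orth n, H y * φ (∑ i, y i)) *
        (∫⁻ u : ℝ, ψ (Real.exp u) * ENNReal.ofReal (Real.exp (n * u))) =
      (∫⁻ y in orth n, H y * ψ (∑ i, y i)) *
        (∫⁻ u : ℝ, φ (Real.exp u) * ENNReal.ofReal (Real.exp (n * u))) := by
  have : Nonempty (Fin n) := ⟨⟨0, hn⟩⟩
  have hS : ∀ y ∈ orth n, 0 < ∑ i, y i := fun y hy =>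
    Finset.sum_pos (fun i _ => hy i) Finset.univ_nonempty
  have L : (∫⁻ y in orth n, H y * φ (∑ i, y i)) *
        (∫⁻ u : ℝ, ψ (Real.exp u) * ENNReal.ofReal (Real.exp (n * u))) =
      ∫⁻ y in orth n, ∫⁻ v : ℝ, H y * φ (∑ i, y i) * (ψ (Real.exp v * ∑ i, y i) *
        ENNReal.ofReal (Real.exp (n * (v + Real.log (∑ i, y i))))) := by
    rw [← lintegral_mul_const _ (by fun_prop)]
    refine setLIntegral_congr_fun (measurableSet_orth n) fun y hy => ?_
    rw [lintegral_const_mul _ (by fun_prop)]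
    congr 1
    rw [← lintegral_add_right_eq_self _ (Real.log (∑ i, y i))]
    refine lintegral_congr fun v => ?_
    rw [Real.exp_add, Real.exp_log (hS y hy)]
  have R : (∫⁻ y in orth n, H y * ψ (∑ i, y i)) *
        (∫⁻ u : ℝ, φ (Real.exp u) * ENNReal.ofReal (Real.exp (n * u))) =
      ∫⁻ y in orth n, ∫⁻ v : ℝ, H y * ψ (∑ i, y i) * (φ (Real.exp (-v) * ∑ i, y i) *
        ENNReal.ofReal (Real.exp (n * (Real.log (∑ i, y i) - v)))) := by
    rw [← lintegral_mul_const _ (by fun_prop)]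
    refine setLIntegral_congr_fun (measurableSet_orth n) fun y hy => ?_
    rw [lintegral_const_mul _ (by fun_prop)]
    congr 1
    rw [← lintegral_sub_left_eq_self _ (Real.log (∑ i, y i))]
    refine lintegral_congr fun v => ?_
    rw [sub_eq_add_neg, Real.exp_add, Real.exp_log (hS y hy), mul_comm (Real.exp (-v))]
  rw [L, R]
  refine (lintegral_lintegral_swap (by fun_prop)).trans
    (Eq.trans ?_ (lintegral_lintegral_swap (by fun_prop)).symm)
  refine lintegral_congr fun v => ?_
  rw [lintegral_orth_scale n v (by fun_prop), ← lintegral_const_mul _ (by fun_prop)]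
  refine setLIntegral_congr_fun (measurableSet_orth n) fun y hy => ?_
  have e1 : ∑ i, (Real.exp (-v) • y) i = Real.exp (-v) * ∑ i, y i := by
    simp [Finset.mul_sum]
  have e2 : Real.exp v * (Real.exp (-v) * ∑ i, y i) = ∑ i, y i := by
    rw [← mul_assoc, ← Real.exp_add]; simp
  simp only [e1, e2]
  rw [hinv _ (Real.exp_pos _) y hy, Real.log_mul (Real.exp_pos _).ne' (hS y hy).ne', Real.log_exp]
  have e3 : ENNReal.ofReal (Real.exp (n * (Real.log (∑ i, y i) - v))) =
      ENNReal.ofReal (Real.exp (-(n * v))) *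
        ENNReal.ofReal (Real.exp (n * (v + (-v + Real.log (∑ i, y i))))) := by
    rw [← ENNReal.ofReal_mul (Real.exp_pos _).le, ← Real.exp_add]
    congr 2
    ring
  rw [e3]
  ring

lemma lintegral_phi (n : ℕ) (hn : 0 < n) {x : ℝ} (hx : 0 < x) :
    ∫⁻ u : ℝ, ENNReal.ofReal (phi n x (Real.exp u)) * ENNReal.ofReal (Real.exp (n * u)) =
      ENNReal.ofReal (Real.Gamma (n * x)) := by
  have hn' : (0 : ℝ) < n := by exact_mod_cast hn
  have hnx : 0 < n * x := by positivity
  have h1 := lintegral_image_eq_lintegral_abs_deriv_mul (s := univ) (f := Real.exp)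
    (f' := Real.exp) MeasurableSet.univ (fun u _ => (Real.hasDerivAt_exp u).hasDerivWithinAt)
    Real.exp_injective.injOn (fun s => ENNReal.ofReal (Real.exp (-s) * s ^ (n * x - 1)))
  rw [image_univ, Real.range_exp, Measure.restrict_univ] at h1
  rw [Real.Gamma_eq_integral hnx, ofReal_integral_eq_lintegral_ofReal
    (Real.GammaIntegral_convergent hnx), h1]
  · refine lintegral_congr fun u => ?_
    rw [← ENNReal.ofReal_mul (by unfold phi; positivity), ← ENNReal.ofReal_mul (by positivity)]
    congr 1
    rw [phi, Real.abs_exp, Real.log_exp, ← Real.exp_mul, ← Real.exp_add, ← Real.exp_add,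
      ← Real.exp_add]
    congr 1
    ring
  · refine (ae_restrict_iff' measurableSet_Ioi).2 (ae_of_all _ fun s hs => ?_)
    have : (0 : ℝ) < s := hs
    simp only [Pi.zero_apply]
    positivity

lemma T_smul (n : ℕ) (hn : 0 < n) {c : ℝ} (hc : 0 < c) {y : Fin n → ℝ} (hy : y ∈ orth n) :
    T n (c • y) = T n y := by
  have : Nonempty (Fin n) := ⟨⟨0, hn⟩⟩
  have hS : 0 < ∑ i, y i := Finset.sum_pos (fun i _ => hy i) Finset.univ_nonempty
  have hn' : (0 : ℝ) < n := by exact_mod_cast hn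
  unfold T
  have h1 : ∀ i, Real.log ((c • y) i) = Real.log c + Real.log (y i) := fun i => by
    rw [Pi.smul_apply, smul_eq_mul, Real.log_mul hc.ne' (hy i).ne']
  have h2 : (∑ i, (c • y) i) / n = c * ((∑ i, y i) / n) := by
    simp only [Pi.smul_apply, smul_eq_mul, ← Finset.mul_sum]; ring
  rw [h2, Real.log_mul hc.ne' (by positivity)]
  simp_rw [h1]
  rw [Finset.sum_add_distrib]
  simp only [Finset.sum_const, Finset.card_univ, Fintype.card_fin, nsmul_eq_mul]
  field_simp
  ring

/-- The tilting constant. -/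
noncomputable def kk (n : ℕ) (x : ℝ) : ℝ := k1 n x * Real.Gamma (n * x) / Real.Gamma n

lemma k1_pos (n : ℕ) {x : ℝ} (hx : 0 < x) : 0 < k1 n x := by
  have := Real.Gamma_pos_of_pos hx
  unfold k1
  positivity

lemma kk_pos (n : ℕ) (hn : 0 < n) {x : ℝ} (hx : 0 < x) : 0 < kk n x := by
  have hn' : (0 : ℝ) < n := by exact_mod_cast hn
  have := k1_pos n hx
  have := Real.Gamma_pos_of_pos hn'
  have := Real.Gamma_pos_of_pos (mul_pos hn' hx)
  unfold kk
  positivity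

/-- Exponential-family representation: tilting from shape one. -/
lemma tilt (n : ℕ) (hn : 0 < n) {x : ℝ} (hx : 0 < x) {B : Set ℝ} (hB : MeasurableSet B) :
    (Measure.pi fun _ : Fin n => gammaMeasure x 1) (T n ⁻¹' B) =
      ENNReal.ofReal (kk n x) *
        ∫⁻ y in T n ⁻¹' B, ENNReal.ofReal (Real.exp (n * (x - 1) * T n y))
          ∂(Measure.pi fun _ : Fin n => gammaMeasure 1 1) := by
  have hn' : (0 : ℝ) < n := by exact_mod_cast hn
  have hT := measurable_T n
  have hTB := hT hB
  set H : (Fin n → ℝ) → ℝ≥0∞ := fun y => (T n ⁻¹' B).indicator 1 y *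
    ENNReal.ofReal (Real.exp (n * (x - 1) * T n y)) with hHdef
  have hHm : Measurable H := by
    have : Measurable ((T n ⁻¹' B).indicator (1 : (Fin n → ℝ) → ℝ≥0∞)) :=
      measurable_one.indicator hTB
    fun_prop
  have e1 := lintegral_gamma n hn hx (h := (T n ⁻¹' B).indicator 1) (measurable_one.indicator hTB)
  rw [lintegral_indicator_one hTB] at e1
  have e2 := lintegral_gamma n hn one_pos (h := H) hHm
  have k11 : k1 n 1 = 1 := by simp [k1]
  simp only [sub_self, mul_zero, zero_mul, Real.exp_zero, ENNReal.ofReal_one, mul_one, k11,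
    one_mul] at e2
  have e3 := radial n hn (H := H) hHm (by
      intro c hc y hy
      simp only [hHdef, T_smul n hn hc hy]
      congr 1
      have hiff : c • y ∈ T n ⁻¹' B ↔ y ∈ T n ⁻¹' B := by
        simp only [mem_preimage, T_smul n hn hc hy]
      by_cases hyB : y ∈ T n ⁻¹' B
      · rw [Set.indicator_of_mem hyB, Set.indicator_of_mem (hiff.2 hyB)]
        rfl
      · rw [Set.indicator_of_notMem hyB, Set.indicator_of_notMem (fun h => hyB (hiff.1 h))])
    (φ := fun s => ENNReal.ofReal (phi n x s)) (ψ := fun s => ENNReal.ofReal (phi n 1 s))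
    (by unfold phi; fun_prop) (by unfold phi; fun_prop)
  rw [lintegral_phi n hn hx, lintegral_phi n hn one_pos, ← e2, mul_one] at e3
  have e4 : ∫⁻ y, H y ∂(Measure.pi fun _ : Fin n => gammaMeasure 1 1) =
      ∫⁻ y in T n ⁻¹' B, ENNReal.ofReal (Real.exp (n * (x - 1) * T n y))
          ∂(Measure.pi fun _ : Fin n => gammaMeasure 1 1) := by
    rw [← lintegral_indicator hTB]
    refine lintegral_congr fun y => ?_
    by_cases hy : y ∈ T n ⁻¹' B
    · simp only [hHdef, Set.indicator_of_mem hy, Pi.one_apply, one_mul]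
    · simp only [hHdef, Set.indicator_of_notMem hy, zero_mul]
  have hg := Real.Gamma_pos_of_pos hn'
  rw [e1, ← e4, kk, mul_div_assoc, ENNReal.ofReal_mul (k1_pos n hx).le, mul_assoc,
    ENNReal.ofReal_div_of_pos hg]
  congr 1
  change ∫⁻ y in orth n, H y * ENNReal.ofReal (phi n x (∑ i, y i)) = _
  rw [mul_comm (_ / _), ← mul_div_assoc, ← e3, ENNReal.mul_div_cancel_right]
  · simpa using hg
  · exact ENNReal.ofReal_ne_top


/-- The reference law: iid standard exponentials. -/
noncomputable def refm (n : ℕ) : Measure (Fin n → ℝ) :=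
  Measure.pi fun _ : Fin n => gammaMeasure 1 1

lemma isProb (n : ℕ) {x : ℝ} (hx : 0 < x) :
    IsProbabilityMeasure (Measure.pi fun _ : Fin n => gammaMeasure x 1) := by
  have := isProbabilityMeasure_gammaMeasure hx one_pos
  infer_instance

lemma integrable_tilt (n : ℕ) (hn : 0 < n) {x : ℝ} (hx : 0 < x) :
    Integrable (fun y => Real.exp (n * (x - 1) * T n y)) (refm n) := by
  have hT := measurable_T n
  refine ⟨by fun_prop, ?_⟩
  rw [hasFiniteIntegral_iff_ofReal (ae_of_all _ fun y => (Real.exp_pos _).le)]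
  have h := tilt n hn hx MeasurableSet.univ
  have := isProb n hx
  rw [preimage_univ, measure_univ, Measure.restrict_univ] at h
  by_contra hcon
  rw [not_lt, top_le_iff] at hcon
  unfold refm at hcon
  rw [hcon, ENNReal.mul_top (by simpa using kk_pos n hn hx)] at h
  exact ENNReal.one_ne_top h

lemma tilt_real (n : ℕ) (hn : 0 < n) {x : ℝ} (hx : 0 < x) {B : Set ℝ} (hB : MeasurableSet B) :
    ((Measure.pi fun _ : Fin n => gammaMeasure x 1) (T n ⁻¹' B)).toReal =
      kk n x * ∫ y in T n ⁻¹' B, Real.exp (n * (x - 1) * T n y) ∂(refm n) := by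
  rw [tilt n hn hx hB, ENNReal.toReal_mul, ENNReal.toReal_ofReal (kk_pos n hn hx).le,
    integral_eq_lintegral_of_nonneg_ae (ae_of_all _ fun y => (Real.exp_pos _).le)
      (integrable_tilt n hn hx).1.restrict]
  rfl

lemma continuousOn_T (n : ℕ) (hn : 0 < n) : ContinuousOn (T n) (orth n) := by
  have : Nonempty (Fin n) := ⟨⟨0, hn⟩⟩
  have hn' : (0 : ℝ) < n := by exact_mod_cast hn
  unfold T
  refine ContinuousOn.sub (ContinuousOn.div_const ?_ _) ?_
  · refine continuousOn_finset_sum _ fun i _ => ?_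
    exact ContinuousOn.log (by fun_prop) (fun y hy => (hy i).ne')
  · refine ContinuousOn.log (by fun_prop) (fun y hy => ?_)
    have : 0 < ∑ i, y i := Finset.sum_pos (fun i _ => hy i) Finset.univ_nonempty
    positivity

lemma refm_pos (n : ℕ) (hn : 0 < n) {U : Set ℝ} (hU : IsOpen U) {y : Fin n → ℝ}
    (hy : y ∈ orth n) (hyU : T n y ∈ U) : refm n (T n ⁻¹' U) ≠ 0 := by
  have hm : Measurable (fun y : Fin n → ℝ => ∏ i, gammaPDF 1 1 (y i)) :=
    Finset.measurable_prod _ fun i _ => (measurable_gammaPDF 1).comp (measurable_pi_apply i)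
  have hO := (continuousOn_T n hn).isOpen_inter_preimage (isOpen_orth n) hU
  rw [refm, pi_gamma n one_pos]
  intro h
  rw [withDensity_apply_eq_zero hm] at h
  refine (hO.measure_pos volume ⟨y, hy, hyU⟩).ne' (measure_mono_null ?_ h)
  rintro z ⟨hz, hzU⟩
  refine ⟨?_, hzU⟩
  change ∏ i, gammaPDF 1 1 (z i) ≠ 0
  rw [Finset.prod_ne_zero_iff]
  intro i _
  simpa [gammaPDF] using gammaPDFReal_pos one_pos one_pos (hz i)

lemma pos_upper (n : ℕ) (hn : 0 < n) {t : ℝ} (ht : t < 0) : refm n (T n ⁻¹' Ioi t) ≠ 0 := by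
  have hn' : (0 : ℝ) < n := by exact_mod_cast hn
  refine refm_pos n hn isOpen_Ioi (y := fun _ => 1) (fun i => one_pos) ?_
  simp [T, hn'.ne', ht]

lemma pos_lower (n : ℕ) (hn : 2 ≤ n) (t : ℝ) : refm n (T n ⁻¹' Iio t) ≠ 0 := by
  have hn' : (0 : ℝ) < n := by exact_mod_cast (by omega : 0 < n)
  let i0 : Fin n := ⟨0, by omega⟩
  let i1 : Fin n := ⟨1, by omega⟩
  have hne : i1 ≠ i0 := by simp [i0, i1]
  set e : ℝ := n * (t - Real.log n - 1) with he
  have hyo : ∀ i, 0 < (if i = i0 then Real.exp e else (1 : ℝ)) := by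
    intro i; split_ifs <;> positivity
  refine refm_pos n (by omega) isOpen_Iio (y := fun i => if i = i0 then Real.exp e else 1) hyo ?_
  have h1 : ∑ i : Fin n, Real.log (if i = i0 then Real.exp e else 1) = e := by
    rw [Finset.sum_eq_single i0]
    · simp
    · intro b _ hb; simp [hb]
    · simp
  have h2 : 1 ≤ ∑ i : Fin n, (if i = i0 then Real.exp e else (1 : ℝ)) := by
    have := Finset.single_le_sum (f := fun i => if i = i0 then Real.exp e else (1 : ℝ))
      (fun i _ => (hyo i).le) (Finset.mem_univ i1)
    simpa [hne] using this
  rw [mem_Iio, T, h1, Real.log_div (by linarith) hn'.ne', he, mul_div_cancel_left₀ _ hn'.ne']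
  have := Real.log_nonneg h2
  linarith

/-- partial Laplace transform -/
noncomputable def L (n : ℕ) (B : Set ℝ) (x : ℝ) : ℝ :=
  ∫ y in T n ⁻¹' B, Real.exp (n * (x - 1) * T n y) ∂(refm n)

lemma L_continuousOn (n : ℕ) (hn : 0 < n) (B : Set ℝ) : ContinuousOn (L n B) (Ioi 0) := by
  have hn' : (0 : ℝ) < n := by exact_mod_cast hn
  have hc := continuousOn_mgf (X := T n) (μ := (refm n).restrict (T n ⁻¹' B))
  have hsub : Ioi (-(n : ℝ)) ⊆ interior (integrableExpSet (T n) ((refm n).restrict (T n ⁻¹' B))) := by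
    refine interior_maximal ?_ isOpen_Ioi
    intro s hs
    have hx : 0 < s / n + 1 := by
      rw [mem_Ioi] at hs
      have : 0 < (s + n) / n := div_pos (by linarith) hn'
      rwa [add_div, div_self hn'.ne'] at this
    have := (integrable_tilt n hn hx).restrict (s := T n ⁻¹' B)
    rw [add_sub_cancel_right, mul_div_cancel₀ _ hn'.ne'] at this
    exact this
  exact ContinuousOn.comp (g := mgf (T n) ((refm n).restrict (T n ⁻¹' B)))
    (f := fun x : ℝ => n * (x - 1)) (hc.mono hsub) (by fun_prop) (fun x hx => by
      rw [mem_Ioi] at hx ⊢; nlinarith)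

lemma L_nonneg (n : ℕ) (B : Set ℝ) (x : ℝ) : 0 ≤ L n B x :=
  integral_nonneg fun y => (Real.exp_pos _).le

lemma L_pos (n : ℕ) (hn : 0 < n) {B : Set ℝ} (hp : refm n (T n ⁻¹' B) ≠ 0)
    {x : ℝ} (hx : 0 < x) : 0 < L n B x := by
  have : NeZero ((refm n).restrict (T n ⁻¹' B)) := ⟨by
    rwa [Ne, Measure.restrict_eq_zero]⟩
  exact integral_exp_pos (integrable_tilt n hn hx).restrict


lemma cdf_eq {n : ℕ} (hn : 0 < n) (t : ℝ) {x : ℝ} (hx : 0 < x) :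
    gammaLogRatioCDF n x t = kk n x * L n (Iic t) x :=
  tilt_real n hn hx measurableSet_Iic

lemma total_eq {n : ℕ} (hn : 0 < n) (t : ℝ) {x : ℝ} (hx : 0 < x) :
    kk n x * (L n (Iic t) x + L n (Ioi t) x) = 1 := by
  have := isProb n hx
  have h := tilt_real n hn hx MeasurableSet.univ
  rw [preimage_univ, measure_univ, Measure.restrict_univ, ENNReal.toReal_one] at h
  rw [h, L, L, ← compl_Iic, preimage_compl,
    integral_add_compl (measurable_T n measurableSet_Iic) (integrable_tilt n hn hx)]

lemma L_lower_le {n : ℕ} (hn : 0 < n) (t : ℝ) {x x' : ℝ} (hx : 0 < x) (hxx : x ≤ x') :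
    L n (Iic t) x' ≤ Real.exp (n * (x' - x) * t) * L n (Iic t) x := by
  have hn' : (0 : ℝ) < n := by exact_mod_cast hn
  unfold L
  rw [← integral_const_mul]
  refine setIntegral_mono_on (integrable_tilt n hn (hx.trans_le hxx)).integrableOn
    ((integrable_tilt n hn hx).const_mul _).integrableOn (measurable_T n measurableSet_Iic) ?_
  intro y hy
  have hy' : T n y ≤ t := hy
  rw [← Real.exp_add, Real.exp_le_exp]
  have : 0 ≤ n * (x' - x) * (t - T n y) :=
    mul_nonneg (mul_nonneg hn'.le (by linarith)) (by linarith)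
  linarith

lemma L_upper_lt {n : ℕ} (hn : 0 < n) {t : ℝ} (ht : t < 0) {x x' : ℝ} (hx : 0 < x) (hxx : x < x') :
    Real.exp (n * (x' - x) * t) * L n (Ioi t) x < L n (Ioi t) x' := by
  have hn' : (0 : ℝ) < n := by exact_mod_cast hn
  have i1 := (integrable_tilt n hn (hx.trans hxx)).restrict (s := T n ⁻¹' Ioi t)
  have i2 := ((integrable_tilt n hn hx).const_mul (Real.exp (n * (x' - x) * t))).restrict
    (s := T n ⁻¹' Ioi t)
  have hmeas := measurable_T n (measurableSet_Ioi (a := t))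
  have hlt : ∀ y ∈ T n ⁻¹' Ioi t, Real.exp (n * (x' - x) * t) * Real.exp (n * (x - 1) * T n y) <
      Real.exp (n * (x' - 1) * T n y) := by
    intro y hy
    have hy' : t < T n y := hy
    rw [← Real.exp_add, Real.exp_lt_exp]
    have : 0 < n * (x' - x) * (T n y - t) :=
      mul_pos (mul_pos hn' (by linarith)) (by linarith)
    linarith
  rw [← sub_pos]
  unfold L
  rw [← integral_const_mul, ← integral_sub i1 i2, integral_pos_iff_support_of_nonneg_ae
    ((ae_restrict_iff' hmeas).2 (ae_of_all _ fun y hy => (sub_pos.2 (hlt y hy)).le)) (i1.sub i2)]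
  rw [Measure.restrict_apply' hmeas]
  refine lt_of_lt_of_le (pos_iff_ne_zero.2 (pos_upper n hn ht)) (measure_mono ?_)
  intro y hy
  exact ⟨(sub_pos.2 (hlt y hy)).ne', hy⟩

lemma strictAnti {n : ℕ} (hn : 2 ≤ n) {t : ℝ} (ht : t < 0) :
    StrictAntiOn (fun x => gammaLogRatioCDF n x t) (Ioi 0) := by
  intro x hx x' hx' hxx
  rw [mem_Ioi] at hx hx'
  have hn0 : 0 < n := by omega
  simp only
  rw [cdf_eq hn0 t hx, cdf_eq hn0 t hx']
  have h1 := total_eq hn0 t hx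
  have h2 := total_eq hn0 t hx'
  have h3 := L_lower_le hn0 t hx hxx.le
  have h4 := L_upper_lt hn0 ht hx hxx
  have hpl : refm n (T n ⁻¹' Iic t) ≠ 0 := fun h =>
    pos_lower n hn t (measure_mono_null (preimage_mono Iio_subset_Iic_self) h)
  have a0 := L_pos n hn0 hpl hx
  have b0 := L_pos n hn0 (pos_upper n hn0 ht) hx
  have a0' := L_pos n hn0 hpl hx'
  have b0' := L_pos n hn0 (pos_upper n hn0 ht) hx'
  set A := L n (Iic t) x
  set A' := L n (Iic t) x'
  set B := L n (Ioi t) x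
  set B' := L n (Ioi t) x'
  have hk : kk n x = 1 / (A + B) := by rw [eq_div_iff (by positivity)]; exact h1
  have hk' : kk n x' = 1 / (A' + B') := by rw [eq_div_iff (by positivity)]; exact h2
  rw [hk, hk', one_div_mul_eq_div, one_div_mul_eq_div, div_lt_div_iff₀ (by positivity) (by positivity)]
  have h5 : A' * B ≤ (Real.exp (n * (x' - x) * t) * A) * B := by gcongr
  have h6 : A * (Real.exp (n * (x' - x) * t) * B) < A * B' := by gcongr
  nlinarith

lemma contOn {n : ℕ} (hn : 2 ≤ n) {t : ℝ} (ht : t < 0) :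
    ContinuousOn (fun x => gammaLogRatioCDF n x t) (Ioi 0) := by
  have hn0 : 0 < n := by omega
  have hne : ∀ x ∈ Ioi (0 : ℝ), L n (Iic t) x + L n (Ioi t) x ≠ 0 := fun x hx h => by
    have := total_eq hn0 t hx
    rw [h, mul_zero] at this
    exact zero_ne_one this
  refine ((L_continuousOn n hn0 (Iic t)).div ((L_continuousOn n hn0 (Iic t)).add
    (L_continuousOn n hn0 (Ioi t))) hne).congr fun x hx => ?_
  simp only [Pi.add_apply, Pi.div_apply]
  rw [cdf_eq hn0 t hx, eq_div_iff (hne x hx), mul_right_comm, total_eq hn0 t hx, one_mul]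

lemma kk_tendsto {n : ℕ} (hn : 2 ≤ n) : Tendsto (kk n) (nhdsWithin 0 (Ioi 0)) (nhds 0) := by
  have hn0 : 0 < n := by omega
  have hn' : (0 : ℝ) < n := by exact_mod_cast hn0
  have hg := Real.Gamma_pos_of_pos hn'
  have hG1 : ContinuousAt Real.Gamma 1 :=
    (Real.differentiableAt_Gamma fun m => by
      have : (0 : ℝ) ≤ m := m.cast_nonneg
      linarith).continuousAt
  have c1 : ContinuousAt (fun x : ℝ => Real.Gamma (x + 1)) 0 :=
    ContinuousAt.comp (g := Real.Gamma) (f := fun x : ℝ => x + 1)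
      (by simpa using hG1) (by fun_prop)
  have c2 : ContinuousAt (fun x : ℝ => Real.Gamma (n * x + 1)) 0 :=
    ContinuousAt.comp (g := Real.Gamma) (f := fun x : ℝ => n * x + 1)
      (by simpa using hG1) (by fun_prop)
  have c3 : ContinuousAt (fun x : ℝ => x ^ (n - 1) * (Real.Gamma (n * x + 1) / n) /
      Real.Gamma (x + 1) ^ n * Real.exp (-(n * (x - 1) * Real.log n)) / Real.Gamma n) 0 := by
    refine ContinuousAt.div_const (ContinuousAt.mul (ContinuousAt.div (ContinuousAt.mul
      (by fun_prop) (c2.div_const _)) (c1.pow n) (by simp)) (by fun_prop)) _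
  have h := c3.tendsto.mono_left (nhdsWithin_le_nhds (s := Ioi 0))
  have h0 : (0 : ℝ) ^ (n - 1) = 0 := zero_pow (by omega)
  simp only [h0, zero_mul, zero_div] at h
  refine h.congr' ?_
  filter_upwards [self_mem_nhdsWithin] with x hx
  have hx' : (0 : ℝ) < x := hx
  have hgx := Real.Gamma_pos_of_pos hx'
  rw [Real.Gamma_add_one hx'.ne', Real.Gamma_add_one (by positivity), kk, k1, mul_pow]
  have : x ^ n = x ^ (n - 1) * x := by rw [← pow_succ]; congr 1; omega
  rw [this]
  field_simp

lemma tendsto_one {n : ℕ} (hn : 2 ≤ n) {t : ℝ} (ht : t < 0) :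
    Tendsto (fun x => gammaLogRatioCDF n x t) (nhdsWithin 0 (Ioi 0)) (nhds 1) := by
  have hn0 : 0 < n := by omega
  have hn' : (0 : ℝ) < n := by exact_mod_cast hn0
  have hlow : Tendsto (fun x => 1 - kk n x * Real.exp (-(n * t))) (nhdsWithin 0 (Ioi 0))
      (nhds 1) := by
    simpa using ((kk_tendsto hn).mul_const (Real.exp (-(n * t)))).const_sub 1
  have hp := isProb n one_pos
  refine tendsto_of_tendsto_of_tendsto_of_le_of_le' hlow tendsto_const_nhds ?_ ?_
  · filter_upwards [Ioo_mem_nhdsGT (zero_lt_one' ℝ)] with x hx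
    rw [cdf_eq hn0 t hx.1]
    have h1 := total_eq hn0 t hx.1
    have hB : L n (Ioi t) x ≤ Real.exp (-(n * t)) := by
      have : L n (Ioi t) x ≤ ∫ y in T n ⁻¹' Ioi t, Real.exp (-(n * t)) ∂(refm n) := by
        have : IsProbabilityMeasure (refm n) := hp
        refine setIntegral_mono_on (integrable_tilt n hn0 hx.1).integrableOn
          (integrable_const _).integrableOn (measurable_T n measurableSet_Ioi) ?_
        intro y hy
        have hy' : t < T n y := hy
        rw [Real.exp_le_exp]
        have e1 : 0 ≤ n * (1 - x) * (T n y - t) :=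
          mul_nonneg (mul_nonneg hn'.le (by linarith [hx.2])) (by linarith)
        have e2 : 0 ≤ n * x * (-t) :=
          mul_nonneg (mul_nonneg hn'.le hx.1.le) (by linarith)
        nlinarith
      refine this.trans ?_
      have : IsProbabilityMeasure (refm n) := hp
      rw [setIntegral_const, smul_eq_mul]
      exact mul_le_of_le_one_left (Real.exp_pos _).le measureReal_le_one
    have := mul_le_mul_of_nonneg_left hB (kk_pos n hn0 hx.1).le
    linarith
  · filter_upwards [self_mem_nhdsWithin] with x hx
    rw [cdf_eq hn0 t hx]
    have h1 := total_eq hn0 t hx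
    have := mul_nonneg (kk_pos n hn0 hx).le (L_nonneg n (Ioi t) x)
    linarith

lemma tendsto_zero {n : ℕ} (hn : 2 ≤ n) {t : ℝ} (ht : t < 0) :
    Tendsto (fun x => gammaLogRatioCDF n x t) atTop (nhds 0) := by
  have hn0 : 0 < n := by omega
  have hn' : (0 : ℝ) < n := by exact_mod_cast hn0
  have : IsProbabilityMeasure (refm n) := isProb n one_pos
  have hq0 := pos_upper n hn0 (t := t / 2) (by linarith)
  set q := (refm n).real (T n ⁻¹' Ioi (t / 2)) with hq
  have hqpos : 0 < q := by
    rw [hq, measureReal_def]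
    exact ENNReal.toReal_pos hq0 (measure_ne_top _ _)
  have hup : Tendsto (fun x : ℝ => Real.exp (n * (x - 1) * (t / 2)) / q) atTop (nhds 0) := by
    rw [← zero_div q]
    refine Tendsto.div_const (Real.tendsto_exp_atBot.comp ?_) q
    have : Tendsto (fun x : ℝ => (n * (t / 2)) * (x + (-1))) atTop atBot :=
      (tendsto_atTop_add_const_right _ (-1) tendsto_id).const_mul_atTop_of_neg
        (by nlinarith)
    refine this.congr fun x => by ring
  refine tendsto_of_tendsto_of_tendsto_of_le_of_le' tendsto_const_nhds hup ?_ ?_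
  · exact Eventually.of_forall fun x => ENNReal.toReal_nonneg
  · filter_upwards [eventually_ge_atTop (1 : ℝ)] with x hx
    have hx0 : 0 < x := by linarith
    rw [cdf_eq hn0 t hx0]
    have h1 := total_eq hn0 t hx0
    have hA := L_lower_le hn0 t one_pos hx
    have hA1 : L n (Iic t) 1 ≤ 1 := by
      simp only [L, sub_self, mul_zero, zero_mul, Real.exp_zero, setIntegral_const, smul_eq_mul,
        mul_one]
      exact measureReal_le_one
    have hA2 : L n (Iic t) x ≤ Real.exp (n * (x - 1) * t) :=
      hA.trans (mul_le_of_le_one_right (Real.exp_pos _).le hA1)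
    have hB1 : Real.exp (n * (x - 1) * (t / 2)) * q ≤ L n (Ioi (t / 2)) x := by
      rw [hq, mul_comm, ← smul_eq_mul, ← setIntegral_const]
      refine setIntegral_mono_on (integrable_const _).integrableOn
        (integrable_tilt n hn0 hx0).integrableOn (measurable_T n measurableSet_Ioi) ?_
      intro y hy
      have hy' : t / 2 < T n y := hy
      rw [Real.exp_le_exp]
      have e1 : 0 ≤ n * (x - 1) * (T n y - t / 2) :=
        mul_nonneg (mul_nonneg hn'.le (by linarith)) (by linarith)
      linarith
    have h2 := total_eq hn0 (t / 2) hx0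
    have hk := kk_pos n hn0 hx0
    have hB2 : kk n x * (Real.exp (n * (x - 1) * (t / 2)) * q) ≤ 1 := by
      have e1 := mul_le_mul_of_nonneg_left hB1 hk.le
      have e2 := mul_nonneg hk.le (L_nonneg n (Iic (t / 2)) x)
      linarith
    have e5 : Real.exp (n * (x - 1) * t) =
        Real.exp (n * (x - 1) * (t / 2)) * Real.exp (n * (x - 1) * (t / 2)) := by
      rw [← Real.exp_add]; congr 1; ring
    rw [le_div_iff₀ hqpos]
    calc kk n x * L n (Iic t) x * q ≤ kk n x * Real.exp (n * (x - 1) * t) * q := by gcongr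
      _ = (kk n x * (Real.exp (n * (x - 1) * (t / 2)) * q)) * Real.exp (n * (x - 1) * (t / 2)) := by
        rw [e5]; ring
      _ ≤ 1 * Real.exp (n * (x - 1) * (t / 2)) := by gcongr
      _ = _ := one_mul _

end GammaIM

/-- Existence and uniqueness of the auxiliary-variable solution in the gamma IM
(Appendix A.1): for every `t₂ < 0` (the support of `T₂` is contained in `(-∞,0)`)
and every `u₂ ∈ (0,1)`, the equation `F_x(t₂) = u₂` has a unique solution
`x ∈ (0,∞)`; indeed `x ↦ F_x(t₂)` is strictly decreasing on `(0,∞)` with limits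
`1` as `x → 0⁺` and `0` as `x → ∞`. -/
theorem gamma_shape_solution_exists_unique (n : ℕ) (hn : 2 ≤ n)
    (t₂ : ℝ) (ht₂ : t₂ < 0) :
    StrictAntiOn (fun x => gammaLogRatioCDF n x t₂) (Ioi 0) ∧
    Tendsto (fun x => gammaLogRatioCDF n x t₂) (nhdsWithin 0 (Ioi 0)) (nhds 1) ∧
    Tendsto (fun x => gammaLogRatioCDF n x t₂) atTop (nhds 0) ∧
    ∀ u₂ ∈ Ioo (0:ℝ) 1, ∃! x : ℝ, x ∈ Ioi (0:ℝ) ∧ gammaLogRatioCDF n x t₂ = u₂ := by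

  have hs := GammaIM.strictAnti hn ht₂
  have h1 := GammaIM.tendsto_one hn ht₂
  have h0 := GammaIM.tendsto_zero hn ht₂
  refine ⟨hs, h1, h0, fun u hu => ?_⟩
  obtain ⟨x, hx, hxu⟩ := isPreconnected_Ioi.intermediate_value_Ioo (l₂ := nhdsWithin (0 : ℝ) (Ioi 0))
    (le_principal_iff.2 (Ioi_mem_atTop 0)) inf_le_right (GammaIM.contOn hn ht₂) h0 h1 hu
  refine ⟨x, ⟨hx, hxu⟩, ?_⟩
  rintro x' ⟨hx', hxu'⟩
  exact hs.injOn hx' hx (hxu'.trans hxu.symm)
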